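/- There exist ε > 0 and C > 0 such that for every Δt ∈ [0, ε), with (β_Σ(Δt), β_1(Δt), …, β_k(Δt)) the unique solution of the constrained system, λ(Δt) := β_Σ(Δt)σ_S²/(σ_K² + β_Σ(Δt)²σ_S²), φ_i(Δt) := 1 − λ(Δt)β_i(Δt)/(1 − λ(Δt)β_Σ(Δt)), and μ_i(Δt) := λ(Δt)φ_i(Δt), one has for each i ∈ {1,…,k}: |φ_i(Δt) − ((1+k)^{1/2}/k^{1/4})·γ_i^{1/2}(σ_K/σ_S)^{1/2}·√Δt| ≤ C·Δt and |μ_i(Δt) − (k^{1/4}/(1+k)^{1/2})·γ_i^{1/2}(σ_S/σ_K)^{1/2}·√Δt| ≤ C·Δt. -/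

import Mathlib

/-!
Writing `r = σ_K / σ_S`, the equation of HFT `i` factors as
`(r² - β_i β_Σ) (r² - (1 - ρ_i Δt) β_i β_Σ) = γ_i Δt β_i r² (r² + β_Σ²)`. On the constraint set the
left side strictly decreases and the right side increases in both `β_i` and `β_Σ`, so the reaction
`β_i` is determined by `β_Σ` and decreases with it. Hence `β_Σ = ∑ β_i` has at most one solution,
and the intermediate value theorem gives one.

In terms of `φ_i = 1 - β_i β_Σ / r²` the equation reads
`φ_i² + ρ_i Δt φ_i (1 - φ_i) = γ_i Δt (1 - φ_i) / λ`. It first gives `φ_i = O(√Δt)`; since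
`β_Σ² = r² ∑ (1 - φ_i)`, it follows that `β_Σ = r √k + O(√Δt)` and `λ = λ₀ + O(√Δt)`, where `λ₀` is
the price impact at `r √k`. Feeding this back, `φ_i² = γ_i Δt / λ₀ + O(Δt √Δt)`, and dividing by
`φ_i + √(γ_i Δt / λ₀)` yields the expansion of `φ_i`.
-/

open Filter Asymptotics Topology

lemma sqrt_sqrt_eq_rpow {x : ℝ} (hx : 0 ≤ x) : √√x = x ^ ((1 : ℝ) / 4) := by
  rw [Real.sqrt_eq_rpow, Real.sqrt_eq_rpow, ← Real.rpow_mul hx]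
  norm_num

lemma tendsto_sqrt_nhdsGE_zero : Tendsto Real.sqrt (𝓝[≥] 0) (𝓝 0) :=
  (Real.continuous_sqrt.tendsto' 0 0 Real.sqrt_zero).mono_left nhdsWithin_le_nhds

lemma eventually_forall_mul_le_one {ι : Type*} [Finite ι] (ρ : ι → ℝ) :
    ∀ᶠ t in 𝓝[≥] (0 : ℝ), ∀ i, ρ i * t ≤ 1 := by
  refine eventually_all.2 fun i => ?_
  have hlim : Tendsto (fun t => ρ i * t) (𝓝[≥] 0) (𝓝 0) :=
    ((continuous_const_mul (ρ i)).tendsto' 0 0 (mul_zero _)).mono_left nhdsWithin_le_nhds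
  exact hlim.eventually_le_const one_pos

lemma isBigO_sub_of_sq_sub_sq {α : Type*} {l : Filter α} {f g u : α → ℝ}
    (hf : ∀ᶠ x in l, 0 ≤ f x) (hg : ∀ᶠ x in l, 0 ≤ g x)
    (h : (fun x => f x ^ 2 - g x ^ 2) =O[l] fun x => u x * g x) :
    (fun x => f x - g x) =O[l] u := by
  obtain ⟨C, hC₀, hC⟩ := h.exists_pos
  refine .of_bound C ?_
  filter_upwards [hf, hg, hC.bound] with x hfx hgx hx
  rw [norm_mul, Real.norm_of_nonneg hgx, ← mul_assoc] at hx
  rcases hgx.eq_or_lt with hgx₀ | hgx₀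
  · have hfx₀ : f x = 0 := by simpa [← hgx₀] using hx
    rw [hfx₀, ← hgx₀, sub_zero, norm_zero]
    positivity
  · refine le_of_mul_le_mul_right (le_trans ?_ hx) hgx₀
    calc ‖f x - g x‖ * g x ≤ ‖f x - g x‖ * (f x + g x) := by gcongr; linarith
      _ = ‖f x ^ 2 - g x ^ 2‖ := by
        rw [sq_sub_sq, norm_mul, Real.norm_of_nonneg (add_nonneg hfx hgx), mul_comm]

/-- The price impact `λ` of the order flow when the HFTs trade with total intensity `B`; here
`r = σ_K / σ_S`. -/
noncomputable def priceImpact (r B : ℝ) : ℝ := B / (r ^ 2 + B ^ 2)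

/-- The inventory mean-reversion parameter `φ` of an HFT with intensity `b` when the total
intensity is `B`. -/
noncomputable def meanReversion (r B b : ℝ) : ℝ :=
  1 - priceImpact r B * b / (1 - priceImpact r B * B)

/-- `b` is the optimal intensity of an HFT reacting to the total intensity `B`: the constrained
equation of one HFT, factored, with `a = 1 - ρ Δt` and `g = γ Δt`. -/
structure IsReaction (r a g B b : ℝ) : Prop where
  pos : 0 < b
  mul_le : b * B ≤ r ^ 2
  eq : (r ^ 2 - b * B) * (r ^ 2 - a * (b * B)) = g * b * r ^ 2 * (r ^ 2 + B ^ 2)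

/-- `(B, β)` solves the constrained system with time step `t`. -/
structure IsSolution {ι : Type*} [Fintype ι] (r : ℝ) (γ ρ : ι → ℝ) (t B : ℝ) (β : ι → ℝ) :
    Prop where
  pos : 0 < B
  eq_sum : B = ∑ i, β i
  isReaction : ∀ i, IsReaction r (1 - ρ i * t) (γ i * t) B (β i)

/-- The smaller root, in rationalised form, of the quadratic equation defining `IsReaction`. -/
noncomputable def reaction (r a g B : ℝ) : ℝ :=
  2 * r ^ 2 / ((1 + a) * B + g * (r ^ 2 + B ^ 2) +
    √(((1 + a) * B + g * (r ^ 2 + B ^ 2)) ^ 2 - 4 * a * B ^ 2))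

section Reaction

variable {r a g B b : ℝ}

lemma priceImpact_pos (hB : 0 < B) : 0 < priceImpact r B := by
  unfold priceImpact
  positivity

lemma differentiableAt_priceImpact (hB : 0 < B) : DifferentiableAt ℝ (priceImpact r) B := by
  have h : r ^ 2 + B ^ 2 ≠ 0 := by positivity
  unfold priceImpact
  fun_prop (disch := exact h)

lemma priceImpact_mul_sqrt {n : ℝ} (hr : 0 < r) (hn : 0 ≤ n) :
    priceImpact r (r * √n) = √n / ((1 + n) * r) := by
  rw [priceImpact, mul_pow, Real.sq_sqrt hn]
  field_simp

lemma sqrt_div_priceImpact {n c : ℝ} (hr : 0 < r) (hn : 0 ≤ n) (hc : 0 ≤ c) :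
    √(c / priceImpact r (r * √n)) = √(1 + n) / n ^ ((1 : ℝ) / 4) * √c * √r := by
  have h : c / priceImpact r (r * √n) = (1 + n) / √n * c * r := by
    rw [priceImpact_mul_sqrt hr hn]
    field_simp
  rw [h, Real.sqrt_mul (by positivity), Real.sqrt_mul (by positivity),
    Real.sqrt_div (by positivity), sqrt_sqrt_eq_rpow hn]

lemma sqrt_mul_priceImpact {n c : ℝ} (hr : 0 < r) (hn : 0 ≤ n) (hc : 0 ≤ c) :
    √(c * priceImpact r (r * √n)) = n ^ ((1 : ℝ) / 4) / √(1 + n) * √c * √r⁻¹ := by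
  have h : c * priceImpact r (r * √n) = √n / (1 + n) * c * r⁻¹ := by
    rw [priceImpact_mul_sqrt hr hn]
    field_simp
  rw [h, Real.sqrt_mul (by positivity), Real.sqrt_mul (by positivity),
    Real.sqrt_div (by positivity), sqrt_sqrt_eq_rpow hn]

lemma priceImpact_div {σK σS : ℝ} (hσS : 0 < σS) :
    priceImpact (σK / σS) B = B * σS ^ 2 / (σK ^ 2 + B ^ 2 * σS ^ 2) := by
  rw [priceImpact]
  field_simp

lemma meanReversion_eq (hr : 0 < r) : meanReversion r B b = 1 - b * B / r ^ 2 := by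
  have h : 1 - priceImpact r B * B = r ^ 2 / (r ^ 2 + B ^ 2) := by
    unfold priceImpact
    field_simp
    ring
  rw [meanReversion, h, priceImpact]
  field_simp

lemma isReaction_reaction (hr : 0 < r) (ha₀ : 0 ≤ a) (ha₁ : a ≤ 1) (hg : 0 ≤ g) (hB : 0 < B) :
    IsReaction r a g B (reaction r a g B) := by
  unfold reaction
  set q := (1 + a) * B + g * (r ^ 2 + B ^ 2) with hq
  have hqB : (1 + a) * B ≤ q := by rw [hq]; linarith [show 0 ≤ g * (r ^ 2 + B ^ 2) by positivity]
  have hq₀ : 0 < q := lt_of_lt_of_le (by positivity) hqB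
  have hdisc : ((1 - a) * B) ^ 2 ≤ q ^ 2 - 4 * a * B ^ 2 := by
    linarith [pow_le_pow_left₀ (by positivity) hqB 2]
  have hS_sq := Real.sq_sqrt ((sq_nonneg _).trans hdisc)
  have hS_ge := Real.le_sqrt_of_sq_le hdisc
  set S := √(q ^ 2 - 4 * a * B ^ 2)
  have hS₀ : 0 ≤ S := le_trans (mul_nonneg (sub_nonneg.2 ha₁) hB.le) hS_ge
  refine ⟨by positivity, ?_, ?_⟩
  · rw [div_mul_eq_mul_div, div_le_iff₀ (by positivity)]
    have hqS : 2 * B ≤ q + S := by linarith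
    linarith [mul_le_mul_of_nonneg_left hqS (sq_nonneg r)]
  · field_simp
    rw [hq] at hS_sq ⊢
    linear_combination hS_sq

lemma continuousOn_reaction (ha₀ : 0 ≤ a) (hg : 0 ≤ g) :
    ContinuousOn (reaction r a g) (Set.Ioi 0) := by
  unfold reaction
  refine continuousOn_const.div (by fun_prop) fun B (hB : 0 < B) => ?_
  positivity

lemma le_reaction (ha₀ : 0 ≤ a) (hg : 0 ≤ g) (hB : 0 < B)
    (h : B * ((1 + a) * B + g * (r ^ 2 + B ^ 2)) ≤ r ^ 2) : B ≤ reaction r a g B := by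
  unfold reaction
  set q := (1 + a) * B + g * (r ^ 2 + B ^ 2)
  have hq₀ : 0 < q := by positivity
  have hS : √(q ^ 2 - 4 * a * B ^ 2) ≤ q :=
    (Real.sqrt_le_left hq₀.le).2 (sub_le_self _ (by positivity))
  rw [le_div_iff₀ (by positivity)]
  linarith [mul_le_mul_of_nonneg_left hS hB.le]

lemma exists_pos_le_reaction {M : ℝ} (hr : 0 < r) (ha₀ : 0 ≤ a) (hg : 0 ≤ g) (hM : 0 < M) :
    ∃ B, 0 < B ∧ B < M ∧ B ≤ reaction r a g B := by
  have hlim : Tendsto (fun B => B * ((1 + a) * B + g * (r ^ 2 + B ^ 2))) (𝓝[>] 0) (𝓝 0) := by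
    have hcont : Continuous fun B : ℝ => B * ((1 + a) * B + g * (r ^ 2 + B ^ 2)) := by fun_prop
    exact (hcont.tendsto' 0 0 (zero_mul _)).mono_left nhdsWithin_le_nhds
  have hsmall := hlim.eventually_le_const (show 0 < r ^ 2 by positivity)
  obtain ⟨B, hB, ⟨hB₀, hBM⟩⟩ := (hsmall.and (Ioo_mem_nhdsGT hM)).exists
  exact ⟨B, hB₀, hBM, le_reaction ha₀ hg hB₀ hB⟩

namespace IsReaction

lemma le_of_total_le {B' b' : ℝ} (h : IsReaction r a g B b) (h' : IsReaction r a g B' b')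
    (ha₀ : 0 ≤ a) (ha₁ : a ≤ 1) (hg : 0 ≤ g) (hB : 0 < B) (hBB' : B ≤ B') : b' ≤ b := by
  by_contra! hbb'
  have hb := h.pos
  have hX : b * B < b' * B' := mul_lt_mul hbb' hBB' hB h'.pos.le
  have haX : a * (b * B) < r ^ 2 :=
    (mul_le_of_le_one_left (mul_pos hb hB).le ha₁).trans_lt (hX.trans_le h'.mul_le)
  have hlhs : (r ^ 2 - b' * B') * (r ^ 2 - a * (b' * B')) <
      (r ^ 2 - b * B) * (r ^ 2 - a * (b * B)) :=
    mul_lt_mul_of_lt_of_le_of_nonneg_of_pos (sub_lt_sub_left hX _) (by gcongr)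
      (sub_nonneg.2 h'.mul_le) (sub_pos.2 haX)
  have hrhs : g * b * r ^ 2 * (r ^ 2 + B ^ 2) ≤ g * b' * r ^ 2 * (r ^ 2 + B' ^ 2) := by
    have := h'.pos
    gcongr
  linarith [h.eq, h'.eq]

lemma meanReversion_nonneg (h : IsReaction r a g B b) (hr : 0 < r) : 0 ≤ meanReversion r B b := by
  rw [meanReversion_eq hr, sub_nonneg, div_le_one (by positivity)]
  exact h.mul_le

lemma meanReversion_le_one (h : IsReaction r a g B b) (hr : 0 < r) (hB : 0 < B) :
    meanReversion r B b ≤ 1 := by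
  have := h.pos
  rw [meanReversion_eq hr, sub_le_self_iff]
  positivity

lemma meanReversion_quadratic (h : IsReaction r a g B b) (hr : 0 < r) (hB : 0 < B) :
    meanReversion r B b ^ 2 + (1 - a) * meanReversion r B b * (1 - meanReversion r B b) =
      g * (1 - meanReversion r B b) * (priceImpact r B)⁻¹ := by
  rw [meanReversion_eq hr, priceImpact]
  field_simp
  linear_combination B * h.eq

lemma meanReversion_sq_le (h : IsReaction r a g B b) (hr : 0 < r) (ha₁ : a ≤ 1) (hB : 0 < B) :
    meanReversion r B b ^ 2 ≤ g * (b * (r ^ 2 + B ^ 2) / r ^ 2) := by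
  have hφ₀ := h.meanReversion_nonneg hr
  have hφ₁ := h.meanReversion_le_one hr hB
  have hrhs : g * (1 - meanReversion r B b) * (priceImpact r B)⁻¹ =
      g * (b * (r ^ 2 + B ^ 2) / r ^ 2) := by
    rw [meanReversion_eq hr, priceImpact]
    field_simp
    ring
  have hterm : 0 ≤ (1 - a) * meanReversion r B b * (1 - meanReversion r B b) :=
    mul_nonneg (mul_nonneg (sub_nonneg.2 ha₁) hφ₀) (sub_nonneg.2 hφ₁)
  linarith [h.meanReversion_quadratic hr hB]

end IsReaction

end Reaction

section Solution

variable {ι : Type*} [Fintype ι] {r t : ℝ} {γ ρ : ι → ℝ}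

lemma isSolution_iff {B : ℝ} {β : ι → ℝ} :
    IsSolution r γ ρ t B β ↔ B = ∑ j, β j ∧
      (∀ i, 0 = (1 - ρ i * t) * β i ^ 2 * B ^ 2
        - (2 - ρ i * t + B * γ i * t) * r ^ 2 * β i * B + r ^ 4 * (1 - β i * γ i * t)) ∧
      0 < B ∧ ∀ i, 0 < β i * B ∧ β i * B ≤ r ^ 2 := by
  constructor
  · rintro ⟨hB, hsum, h⟩
    exact ⟨hsum, fun i => by linear_combination -(h i).eq, hB,
      fun i => ⟨mul_pos (h i).pos hB, (h i).mul_le⟩⟩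
  · rintro ⟨hsum, heq, hB, h⟩
    exact ⟨hB, hsum, fun i => ⟨pos_of_mul_pos_left (h i).1 hB.le, (h i).2,
      by linear_combination -heq i⟩⟩

lemma IsSolution.unique {B B' : ℝ} {β β' : ι → ℝ} (h : IsSolution r γ ρ t B β)
    (h' : IsSolution r γ ρ t B' β') (hγ : ∀ i, 0 ≤ γ i) (hρ : ∀ i, 0 ≤ ρ i) (ht : 0 ≤ t)
    (hρt : ∀ i, ρ i * t ≤ 1) : B = B' ∧ β = β' := by
  wlog hBB' : B ≤ B' generalizing B B' β β'
  · exact (this h' h (le_of_not_ge hBB')).imp Eq.symm Eq.symm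
  have reaction_le {B₁ B₂ : ℝ} {β₁ β₂ : ι → ℝ} (h₁ : IsSolution r γ ρ t B₁ β₁)
      (h₂ : IsSolution r γ ρ t B₂ β₂) (hle : B₁ ≤ B₂) : β₂ ≤ β₁ := fun i =>
    (h₁.isReaction i).le_of_total_le (h₂.isReaction i) (sub_nonneg.2 (hρt i))
      (sub_le_self _ (mul_nonneg (hρ i) ht)) (mul_nonneg (hγ i) ht) h₁.pos hle
  have hβ : β' ≤ β := reaction_le h h' hBB'
  have hB : B' ≤ B := by
    rw [h.eq_sum, h'.eq_sum]
    exact Finset.sum_le_sum fun i _ => hβ i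
  exact ⟨hBB'.antisymm hB, (reaction_le h' h hB).antisymm hβ⟩

lemma exists_isSolution [Nonempty ι] (hr : 0 < r) (hγ : ∀ i, 0 ≤ γ i) (hρ : ∀ i, 0 ≤ ρ i)
    (ht : 0 ≤ t) (hρt : ∀ i, ρ i * t ≤ 1) : ∃ B β, IsSolution r γ ρ t B β := by
  have ha₀ i : 0 ≤ 1 - ρ i * t := sub_nonneg.2 (hρt i)
  have hg i : 0 ≤ γ i * t := mul_nonneg (hγ i) ht
  let R (B : ℝ) (i : ι) : ℝ := reaction r (1 - ρ i * t) (γ i * t) B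
  have hR {B : ℝ} (hB : 0 < B) (i : ι) : IsReaction r (1 - ρ i * t) (γ i * t) B (R B i) :=
    isReaction_reaction hr (ha₀ i) (sub_le_self _ (mul_nonneg (hρ i) ht)) (hg i) hB
  set M := r * √(Fintype.card ι) with hM
  have hM₀ : 0 < M := by positivity
  obtain ⟨i₀⟩ := ‹Nonempty ι›
  obtain ⟨m, hm₀, hmM, hm⟩ := exists_pos_le_reaction hr (ha₀ i₀) (hg i₀) hM₀
  have hcont : ContinuousOn (fun B => ∑ i, R B i - B) (Set.Icc m M) :=
    (continuousOn_finsetSum _ fun i _ => (continuousOn_reaction (ha₀ i) (hg i)).mono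
      fun _ hB => hm₀.trans_le hB.1).sub continuousOn_id
  have hlow : 0 ≤ ∑ i, R m i - m :=
    sub_nonneg.2 <| hm.trans <|
      Finset.single_le_sum (f := R m) (fun i _ => (hR hm₀ i).pos.le) (Finset.mem_univ i₀)
  have hhigh : ∑ i, R M i - M ≤ 0 := by
    have hcard : Fintype.card ι * (r ^ 2 / M) = M := by
      rw [hM]
      field_simp
      exact (Real.sq_sqrt (Nat.cast_nonneg _)).symm
    have hsum : ∑ i, R M i ≤ Fintype.card ι • (r ^ 2 / M) :=
      Finset.sum_le_card_nsmul _ _ _ fun i _ => (le_div_iff₀ hM₀).2 (hR hM₀ i).mul_le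
    rw [nsmul_eq_mul, hcard] at hsum
    exact sub_nonpos.2 hsum
  obtain ⟨B, hB, hB_eq⟩ := intermediate_value_Icc' hmM.le hcont ⟨hhigh, hlow⟩
  have hB₀ : 0 < B := hm₀.trans_le hB.1
  exact ⟨B, R B, hB₀, (sub_eq_zero.1 hB_eq).symm, hR hB₀⟩

namespace IsSolution

variable {B : ℝ} {β : ι → ℝ}

lemma total_sq_sub_sq (h : IsSolution r γ ρ t B β) (hr : 0 < r) :
    B ^ 2 - (r * √(Fintype.card ι)) ^ 2 = -r ^ 2 * ∑ i, meanReversion r B (β i) := by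
  have hsum : ∑ i, β i * B = B ^ 2 := by rw [← Finset.sum_mul, ← h.eq_sum, sq]
  simp only [meanReversion_eq hr, Finset.sum_sub_distrib, ← Finset.sum_div, hsum, mul_pow,
    Real.sq_sqrt (Nat.cast_nonneg _), Finset.sum_const, Finset.card_univ, nsmul_eq_mul, mul_one]
  field_simp
  ring

lemma le_mul_sqrt_card (h : IsSolution r γ ρ t B β) (hr : 0 < r) :
    B ≤ r * √(Fintype.card ι) := by
  have hsum : 0 ≤ ∑ i, meanReversion r B (β i) :=
    Finset.sum_nonneg fun i _ => (h.isReaction i).meanReversion_nonneg hr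
  refine le_of_sq_le_sq ?_ (by positivity)
  linarith [h.total_sq_sub_sq hr, mul_nonneg (sq_nonneg r) hsum]

lemma meanReversion_sq_le (h : IsSolution r γ ρ t B β) (hr : 0 < r) {i : ι} (hγ : 0 ≤ γ i)
    (hρ : 0 ≤ ρ i) (ht : 0 ≤ t) :
    meanReversion r B (β i) ^ 2 ≤ γ i * (r * √(Fintype.card ι) * (1 + Fintype.card ι)) * t := by
  have hβB : β i ≤ B := by
    rw [h.eq_sum]
    exact Finset.single_le_sum (fun j _ => (h.isReaction j).pos.le) (Finset.mem_univ i)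
  have hB := h.le_mul_sqrt_card hr
  have hB₀ := h.pos
  calc meanReversion r B (β i) ^ 2
      ≤ γ i * t * (β i * (r ^ 2 + B ^ 2) / r ^ 2) :=
        (h.isReaction i).meanReversion_sq_le hr (sub_le_self _ (mul_nonneg hρ ht)) hB₀
    _ ≤ γ i * t * (r * √(Fintype.card ι) * (r ^ 2 + (r * √(Fintype.card ι)) ^ 2) / r ^ 2) := by
        gcongr
        exact hβB.trans hB
    _ = γ i * (r * √(Fintype.card ι) * (1 + Fintype.card ι)) * t := by
        rw [mul_pow, Real.sq_sqrt (Nat.cast_nonneg _)]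
        field_simp

end IsSolution

end Solution

section Expansion

variable {ι : Type*} [Fintype ι] {r : ℝ} {γ ρ : ι → ℝ} {B : ℝ → ℝ} {β : ℝ → ι → ℝ}

lemma isBigO_meanReversion_sqrt (hr : 0 < r) (hγ : ∀ i, 0 ≤ γ i) (hρ : ∀ i, 0 ≤ ρ i)
    (h : ∀ᶠ t in 𝓝[≥] 0, IsSolution r γ ρ t (B t) (β t)) (i : ι) :
    (fun t => meanReversion r (B t) (β t i)) =O[𝓝[≥] 0] Real.sqrt := by
  refine .of_bound √(γ i * (r * √(Fintype.card ι) * (1 + Fintype.card ι))) ?_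
  filter_upwards [h, self_mem_nhdsWithin] with t hsol (ht : 0 ≤ t)
  have := hγ i
  rw [Real.norm_of_nonneg (Real.sqrt_nonneg t), ← Real.sqrt_mul (by positivity)]
  exact Real.abs_le_sqrt (hsol.meanReversion_sq_le hr (hγ i) (hρ i) ht)

lemma isBigO_total_sub [Nonempty ι] (hr : 0 < r) (hγ : ∀ i, 0 ≤ γ i) (hρ : ∀ i, 0 ≤ ρ i)
    (h : ∀ᶠ t in 𝓝[≥] 0, IsSolution r γ ρ t (B t) (β t)) :
    (fun t => B t - r * √(Fintype.card ι)) =O[𝓝[≥] 0] Real.sqrt := by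
  have hlim : 0 < r * √(Fintype.card ι) := by positivity
  refine isBigO_sub_of_sq_sub_sq (h.mono fun t hsol => hsol.pos.le) (.of_forall fun _ => hlim.le) ?_
  have hsum : (fun t => -r ^ 2 * ∑ i, meanReversion r (B t) (β t i)) =O[𝓝[≥] 0] Real.sqrt :=
    (IsBigO.fun_sum fun i _ => isBigO_meanReversion_sqrt hr hγ hρ h i).const_mul_left _
  refine (hsum.congr' (h.mono fun t hsol => (hsol.total_sq_sub_sq hr).symm) .rfl).trans ?_
  simpa only [mul_comm] using isBigO_self_const_mul hlim.ne' Real.sqrt (𝓝[≥] 0)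

lemma tendsto_total [Nonempty ι] (hr : 0 < r) (hγ : ∀ i, 0 ≤ γ i) (hρ : ∀ i, 0 ≤ ρ i)
    (h : ∀ᶠ t in 𝓝[≥] 0, IsSolution r γ ρ t (B t) (β t)) :
    Tendsto B (𝓝[≥] 0) (𝓝 (r * √(Fintype.card ι))) :=
  tendsto_sub_nhds_zero_iff.1 <|
    (isBigO_total_sub hr hγ hρ h).trans_tendsto tendsto_sqrt_nhdsGE_zero

lemma isBigO_comp_total_sub [Nonempty ι] (hr : 0 < r) (hγ : ∀ i, 0 ≤ γ i) (hρ : ∀ i, 0 ≤ ρ i)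
    (h : ∀ᶠ t in 𝓝[≥] 0, IsSolution r γ ρ t (B t) (β t)) {F : ℝ → ℝ}
    (hF : DifferentiableAt ℝ F (r * √(Fintype.card ι))) :
    (fun t => F (B t) - F (r * √(Fintype.card ι))) =O[𝓝[≥] 0] Real.sqrt :=
  (hF.isBigO_sub.comp_tendsto (tendsto_total hr hγ hρ h)).trans (isBigO_total_sub hr hγ hρ h)

lemma isBigO_meanReversion_sq_sub [Nonempty ι] (hr : 0 < r) (hγ : ∀ i, 0 ≤ γ i)
    (hρ : ∀ i, 0 ≤ ρ i) (h : ∀ᶠ t in 𝓝[≥] 0, IsSolution r γ ρ t (B t) (β t)) (i : ι) :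
    (fun t => meanReversion r (B t) (β t i) ^ 2 -
      γ i / priceImpact r (r * √(Fintype.card ι)) * t) =O[𝓝[≥] 0] fun t => t * √t := by
  set L := r * √(Fintype.card ι)
  have hL : 0 < L := by positivity
  have hφ := isBigO_meanReversion_sqrt hr hγ hρ h i
  have hinv : DifferentiableAt ℝ (fun B => (priceImpact r B)⁻¹) L :=
    (differentiableAt_priceImpact hL).inv (priceImpact_pos hL).ne'
  have hdepth : (fun t => (priceImpact r (B t))⁻¹ - (priceImpact r L)⁻¹) =O[𝓝[≥] 0] Real.sqrt :=
    isBigO_comp_total_sub hr hγ hρ h hinv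
  have hfactor : (fun t => γ i * (priceImpact r (B t))⁻¹ +
      ρ i * (1 - meanReversion r (B t) (β t i))) =O[𝓝[≥] 0] fun _ => (1 : ℝ) :=
    (((hinv.continuousAt.tendsto.comp (tendsto_total hr hγ hρ h)).const_mul _).add
      (((hφ.trans_tendsto tendsto_sqrt_nhdsGE_zero).const_sub _).const_mul _)).isBigO_one ℝ
  have hremainder := (isBigO_refl (fun t : ℝ => t) (𝓝[≥] 0)).mul
    ((hdepth.const_mul_left (γ i)).sub (by simpa only [mul_one] using hφ.mul hfactor))
  refine hremainder.congr' (h.mono fun t hsol => ?_) .rfl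
  have hquad := (hsol.isReaction i).meanReversion_quadratic hr hsol.pos
  rw [div_eq_mul_inv]
  linear_combination -hquad

lemma isBigO_meanReversion_sub [Nonempty ι] (hr : 0 < r) (hγ : ∀ i, 0 < γ i)
    (hρ : ∀ i, 0 ≤ ρ i) (h : ∀ᶠ t in 𝓝[≥] 0, IsSolution r γ ρ t (B t) (β t)) (i : ι) :
    (fun t => meanReversion r (B t) (β t i) -
      √(γ i / priceImpact r (r * √(Fintype.card ι))) * √t) =O[𝓝[≥] 0] fun t => t := by
  set A := √(γ i / priceImpact r (r * √(Fintype.card ι))) with hA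
  have hlam : 0 < priceImpact r (r * √(Fintype.card ι)) := priceImpact_pos (by positivity)
  have hratio : 0 < γ i / priceImpact r (r * √(Fintype.card ι)) := div_pos (hγ i) hlam
  have hA₀ : 0 < A := Real.sqrt_pos.2 hratio
  refine isBigO_sub_of_sq_sub_sq
    (h.mono fun t hsol => (hsol.isReaction i).meanReversion_nonneg hr)
    (.of_forall fun t => by positivity) ?_
  have hsq := isBigO_meanReversion_sq_sub hr (fun j => (hγ j).le) hρ h i
  refine (hsq.congr' ?_ .rfl).trans ?_
  · filter_upwards [self_mem_nhdsWithin] with t (ht : 0 ≤ t)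
    rw [mul_pow, hA, Real.sq_sqrt hratio.le, Real.sq_sqrt ht]
  · simpa only [mul_left_comm] using isBigO_self_const_mul hA₀.ne' (fun t => t * √t) (𝓝[≥] 0)

lemma isBigO_priceImpact_mul_meanReversion_sub [Nonempty ι] (hr : 0 < r) (hγ : ∀ i, 0 < γ i)
    (hρ : ∀ i, 0 ≤ ρ i) (h : ∀ᶠ t in 𝓝[≥] 0, IsSolution r γ ρ t (B t) (β t)) (i : ι) :
    (fun t => priceImpact r (B t) * meanReversion r (B t) (β t i) -
      √(γ i * priceImpact r (r * √(Fintype.card ι))) * √t) =O[𝓝[≥] 0] fun t => t := by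
  set L := r * √(Fintype.card ι)
  have hL : 0 < L := by positivity
  have hlam : 0 < priceImpact r L := priceImpact_pos hL
  have hdiff := differentiableAt_priceImpact (r := r) hL
  have hγ₀ i := (hγ i).le
  have hcoeff : priceImpact r L * √(γ i / priceImpact r L) = √(γ i * priceImpact r L) := by
    nth_rw 1 [← Real.sqrt_sq hlam.le]
    rw [← Real.sqrt_mul (sq_nonneg _)]
    field_simp
  have hbounded : (fun t => priceImpact r (B t)) =O[𝓝[≥] 0] fun _ => (1 : ℝ) :=
    (hdiff.continuousAt.tendsto.comp (tendsto_total hr hγ₀ hρ h)).isBigO_one ℝ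
  have hφ : (fun t => priceImpact r (B t) * (meanReversion r (B t) (β t i) -
      √(γ i / priceImpact r L) * √t)) =O[𝓝[≥] 0] fun t => t := by
    simpa only [one_mul] using hbounded.mul (isBigO_meanReversion_sub hr hγ hρ h i)
  have hlam_sub : (fun t => (priceImpact r (B t) - priceImpact r L) *
      (√(γ i / priceImpact r L) * √t)) =O[𝓝[≥] 0] fun t => t := by
    refine ((isBigO_comp_total_sub hr hγ₀ hρ h hdiff).mul
      (isBigO_const_mul_self _ Real.sqrt _)).congr' .rfl ?_
    filter_upwards [self_mem_nhdsWithin] with t (ht : 0 ≤ t) using Real.mul_self_sqrt ht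
  refine (hφ.add hlam_sub).congr_left fun t => ?_
  rw [← hcoeff]
  ring

end Expansion

theorem exists_unique_isSolution_expansion {ι : Type*} [Fintype ι] [Nonempty ι] {r : ℝ}
    {γ ρ : ι → ℝ} (hr : 0 < r) (hγ : ∀ i, 0 < γ i) (hρ : ∀ i, 0 ≤ ρ i) :
    ∃ ε > 0, ∃ C > 0, ∀ t, 0 ≤ t → t < ε → ∃ B β, IsSolution r γ ρ t B β ∧
      (∀ B' β', IsSolution r γ ρ t B' β' → B' = B ∧ β' = β) ∧
      (∀ i, |meanReversion r B (β i) -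
        √(γ i / priceImpact r (r * √(Fintype.card ι))) * √t| ≤ C * t) ∧
      ∀ i, |priceImpact r B * meanReversion r B (β i) -
        √(γ i * priceImpact r (r * √(Fintype.card ι))) * √t| ≤ C * t := by
  have hγ₀ i := (hγ i).le
  have hstep : ∀ᶠ t in 𝓝[≥] 0, 0 ≤ t ∧ ∀ i, ρ i * t ≤ 1 :=
    eventually_mem_nhdsWithin.and (eventually_forall_mul_le_one ρ)
  have hexists : ∀ᶠ t in 𝓝[≥] 0, ∃ s : ℝ × (ι → ℝ), IsSolution r γ ρ t s.1 s.2 :=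
    hstep.mono fun t ht => Prod.exists.2 (exists_isSolution hr hγ₀ hρ ht.1 ht.2)
  obtain ⟨s, hs⟩ := hexists.choice
  obtain ⟨C₁, hC₁, hφ⟩ := (isBigO_pi.2 (isBigO_meanReversion_sub hr hγ hρ hs)).exists_pos
  obtain ⟨C₂, -, hμ⟩ :=
    (isBigO_pi.2 (isBigO_priceImpact_mul_meanReversion_sub hr hγ hρ hs)).exists_pos
  obtain ⟨ε, hε, hall⟩ := mem_nhdsGE_iff_exists_Ico_subset.1 <|
    hstep.and (hs.and ((hφ.weaken (le_max_left C₁ C₂)).bound.and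
      (hμ.weaken (le_max_right C₁ C₂)).bound))
  refine ⟨ε, hε, max C₁ C₂, lt_max_of_lt_left hC₁, fun t ht₀ htε => ?_⟩
  obtain ⟨⟨-, hρt⟩, hsol, hφt, hμt⟩ := hall ⟨ht₀, htε⟩
  rw [Real.norm_of_nonneg ht₀] at hφt hμt
  exact ⟨(s t).1, (s t).2, hsol, fun B' β' h' => h'.unique hsol hγ₀ hρ ht₀ hρt,
    fun i => (norm_le_pi_norm _ i).trans hφt, fun i => (norm_le_pi_norm _ i).trans hμt⟩

/-- with `(β_Σ, β_1, …, β_k)` the unique solution of the constrained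
system, `λ = β_Σσ_S²/(σ_K²+β_Σ²σ_S²)`, `φ_i = 1 − λβ_i/(1−λβ_Σ)`, `μ_i = λφ_i`, one
has `φ_i = ((1+k)^{1/2}/k^{1/4})γ_i^{1/2}(σ_K/σ_S)^{1/2}√Δt + O(Δt)` and
`μ_i = (k^{1/4}/(1+k)^{1/2})γ_i^{1/2}(σ_S/σ_K)^{1/2}√Δt + O(Δt)`. -/
theorem stmt9 (k : ℕ) (hk : 1 ≤ k) (σS σK : ℝ) (hσS : 0 < σS) (hσK : 0 < σK)
    (γ ρ : Fin k → ℝ) (hγ : ∀ i, 0 < γ i) (hρ : ∀ i, 0 < ρ i) :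
    ∃ ε > 0, ∃ C > 0, ∀ Δt : ℝ, 0 ≤ Δt → Δt < ε →
      ∃ (βSum lam : ℝ) (β φ μ : Fin k → ℝ),
        (βSum = ∑ j, β j ∧
          (∀ i, 0 = (1 - ρ i * Δt) * (β i) ^ 2 * βSum ^ 2
              - (2 - ρ i * Δt + βSum * γ i * Δt) * (σK / σS) ^ 2 * β i * βSum
              + (σK / σS) ^ 4 * (1 - β i * γ i * Δt)) ∧
          0 < βSum ∧
          (∀ i, 0 < β i * βSum ∧ β i * βSum ≤ σK ^ 2 / σS ^ 2)) ∧
        (∀ q : ℝ × (Fin k → ℝ),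
          (q.1 = ∑ j, q.2 j ∧
            (∀ i, 0 = (1 - ρ i * Δt) * (q.2 i) ^ 2 * q.1 ^ 2
                - (2 - ρ i * Δt + q.1 * γ i * Δt) * (σK / σS) ^ 2 * q.2 i * q.1
                + (σK / σS) ^ 4 * (1 - q.2 i * γ i * Δt)) ∧
            0 < q.1 ∧
            (∀ i, 0 < q.2 i * q.1 ∧ q.2 i * q.1 ≤ σK ^ 2 / σS ^ 2)) →
          q.1 = βSum ∧ q.2 = β) ∧
        lam = βSum * σS ^ 2 / (σK ^ 2 + βSum ^ 2 * σS ^ 2) ∧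
        (∀ i, φ i = 1 - lam * β i / (1 - lam * βSum)) ∧
        (∀ i, μ i = lam * φ i) ∧
        (∀ i, |φ i - Real.sqrt (1 + k) / (k : ℝ) ^ ((1 : ℝ) / 4)
              * Real.sqrt (γ i) * Real.sqrt (σK / σS) * Real.sqrt Δt| ≤ C * Δt) ∧
        (∀ i, |μ i - (k : ℝ) ^ ((1 : ℝ) / 4) / Real.sqrt (1 + k)
              * Real.sqrt (γ i) * Real.sqrt (σS / σK) * Real.sqrt Δt| ≤ C * Δt) := by
  have : Nonempty (Fin k) := ⟨⟨0, hk⟩⟩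
  have hr : 0 < σK / σS := div_pos hσK hσS
  obtain ⟨ε, hε, C, hC, hexp⟩ := exists_unique_isSolution_expansion hr hγ fun i => (hρ i).le
  refine ⟨ε, hε, C, hC, fun Δt hΔt₀ hΔtε => ?_⟩
  obtain ⟨B, β, hsol, hunique, hφ, hμ⟩ := hexp Δt hΔt₀ hΔtε
  have hsqrt_div i := sqrt_div_priceImpact hr k.cast_nonneg (hγ i).le
  have hsqrt_mul i := sqrt_mul_priceImpact hr k.cast_nonneg (hγ i).le
  simp only [Fintype.card_fin, hsqrt_div, hsqrt_mul, inv_div] at hφ hμ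
  refine ⟨B, priceImpact (σK / σS) B, β, fun i => meanReversion (σK / σS) B (β i),
    fun i => priceImpact (σK / σS) B * meanReversion (σK / σS) B (β i), ?_, ?_,
    priceImpact_div hσS, fun _ => rfl, fun _ => rfl, hφ, hμ⟩
  · rw [← div_pow]
    exact isSolution_iff.1 hsol
  · rintro ⟨B', β'⟩ h'
    rw [← div_pow] at h'
    exact hunique B' β' (isSolution_iff.2 h')
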